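/- arXiv:2504.02208 — 2 statements merged into one kernel-verified Lean document; each statement's English description precedes it below -/
import Mathlib

section
/- For all β > 0, σ > 0 and ω ∈ ℝ, the improper integral ∫_{βσ²/2}^{∞} (1/(√(2π) · √(2x/β − σ²))) · exp(−βx/4 − ω²/(2(2x/β − σ²))) dx converges and equals exp(−σ²β²/8) · exp(−|ω|β/2). -/
open MeasureTheory

noncomputable def mwG (t : ℝ) : ℝ := ∫ s in (0:ℝ)..t, Real.exp (-(1/2) * s ^ 2)

lemma mwG_deriv (t : ℝ) : HasDerivAt mwG (Real.exp (-(1/2) * t ^ 2)) t := by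
  have hc : Continuous (fun s : ℝ => Real.exp (-(1/2) * s ^ 2)) := by fun_prop
  exact intervalIntegral.integral_hasDerivAt_right (hc.intervalIntegrable _ _)
    hc.aestronglyMeasurable.stronglyMeasurableAtFilter hc.continuousAt

lemma mwG_top : Filter.Tendsto mwG Filter.atTop (nhds (Real.sqrt (2 * Real.pi) / 2)) := by
  have h := intervalIntegral_tendsto_integral_Ioi (μ := volume) (0:ℝ)
    (integrable_exp_neg_mul_sq (b := 1/2) (by norm_num)).integrableOn Filter.tendsto_id
  rw [integral_gaussian_Ioi] at h
  have e : Real.pi / (1/2) = 2 * Real.pi := by ring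
  rw [e] at h
  exact h

lemma mwG_neg (t : ℝ) : mwG (-t) = - mwG t := by
  have h := intervalIntegral.integral_comp_neg (a := 0) (b := t)
    (fun s : ℝ => Real.exp (-(1/2) * s ^ 2))
  simp only [neg_sq, neg_zero] at h
  unfold mwG
  rw [h, intervalIntegral.integral_symm]

lemma mwG_bot : Filter.Tendsto mwG Filter.atBot (nhds (-(Real.sqrt (2 * Real.pi) / 2))) := by
  have h := (mwG_top.comp Filter.tendsto_neg_atBot_atTop).neg
  refine h.congr (fun t => ?_)
  simp [mwG_neg]

lemma mw_aux {a l m : ℝ} {f f' : ℝ → ℝ} (hd : ∀ x ∈ Set.Ioi a, HasDerivAt f (f' x) x)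
    (hp : ∀ x ∈ Set.Ioi a, 0 ≤ f' x) (hl : Filter.Tendsto f (nhdsWithin a (Set.Ioi a)) (nhds l))
    (hm : Filter.Tendsto f Filter.atTop (nhds m)) :
    IntegrableOn f' (Set.Ioi a) ∧ ∫ x in Set.Ioi a, f' x = m - l := by
  have hc : ContinuousWithinAt (Function.update f a l) (Set.Ici a) a := by
    rw [continuousWithinAt_update_same]
    simpa using hl
  have hd' : ∀ x ∈ Set.Ioi a, HasDerivAt (Function.update f a l) (f' x) x := by
    intro x hx
    refine (hd x hx).congr_of_eventuallyEq ?_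
    filter_upwards [isOpen_Ioi.mem_nhds hx] with y hy
    exact Function.update_of_ne (ne_of_gt hy) _ _
  have hm' : Filter.Tendsto (Function.update f a l) Filter.atTop (nhds m) := by
    refine hm.congr' ?_
    filter_upwards [Filter.eventually_gt_atTop a] with y hy
    exact (Function.update_of_ne (ne_of_gt hy) _ _).symm
  refine ⟨integrableOn_Ioi_deriv_of_nonneg hc hd' hp hm', ?_⟩
  rw [integral_Ioi_of_hasDerivAt_of_nonneg hc hd' hp hm']
  simp

/-- The Metropolis frequency-weight integral: for `β, σ > 0` and `ω ∈ ℝ`,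
`∫_{βσ²/2}^∞ (√(2π)·√(2x/β − σ²))⁻¹ exp(−βx/4 − ω²/(2(2x/β − σ²))) dx`
converges and equals `e^{−σ²β²/8} e^{−|ω|β/2}`. -/
theorem metropolis_weight_integral (β σ ω : ℝ) (hβ : 0 < β) (hσ : 0 < σ) :
    IntegrableOn
      (fun x : ℝ => (1 / (Real.sqrt (2 * Real.pi) * Real.sqrt (2 * x / β - σ ^ 2))) *
        Real.exp (-(β * x) / 4 - ω ^ 2 / (2 * (2 * x / β - σ ^ 2))))
      (Set.Ioi (β * σ ^ 2 / 2)) volume ∧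
    ∫ x in Set.Ioi (β * σ ^ 2 / 2),
        (1 / (Real.sqrt (2 * Real.pi) * Real.sqrt (2 * x / β - σ ^ 2))) *
          Real.exp (-(β * x) / 4 - ω ^ 2 / (2 * (2 * x / β - σ ^ 2))) =
      Real.exp (-(σ ^ 2 * β ^ 2) / 8) * Real.exp (-(|ω| * β) / 2) := by
  set S := Real.sqrt (2 * Real.pi) with hS
  have hS0 : 0 < S := by positivity
  set q := |ω| with hq
  have hq0 : 0 ≤ q := abs_nonneg ω
  have hq2 : ω ^ 2 = q ^ 2 := (sq_abs ω).symm
  set c := Real.exp (-(σ ^ 2 * β ^ 2) / 8) / S with hcdef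
  set k := q * β / 2 with hk
  let H : ℝ → ℝ := fun y => c * (Real.exp k * mwG (β / 2 * y + q / y) +
    Real.exp (-k) * mwG (β / 2 * y - q / y))
  let Y : ℝ → ℝ := fun x => Real.sqrt (2 * x / β - σ ^ 2)
  have hpos : ∀ x ∈ Set.Ioi (β * σ ^ 2 / 2), 0 < 2 * x / β - σ ^ 2 := by
    intro x hx
    have hx' : β * σ ^ 2 / 2 < x := hx
    rw [sub_pos, lt_div_iff₀ hβ]
    linarith
  have hH : ∀ y, 0 < y → HasDerivAt H
      (c * (β * Real.exp (-(β ^ 2 * y ^ 2 / 8) - q ^ 2 / (2 * y ^ 2)))) y := by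
    intro y hy
    have hi : HasDerivAt (fun y : ℝ => q / y) (-(q / y ^ 2)) y := by
      have := (hasDerivAt_inv hy.ne').const_mul q
      simpa [div_eq_mul_inv] using this
    have hlin : HasDerivAt (fun y : ℝ => β / 2 * y) (β / 2) y := by
      simpa using (hasDerivAt_id y).const_mul (β / 2)
    have h1 := ((mwG_deriv _).comp y (hlin.add hi)).const_mul (Real.exp k)
    have h2 := ((mwG_deriv _).comp y (hlin.sub hi)).const_mul (Real.exp (-k))
    have h3 := (h1.add h2).const_mul c
    refine h3.congr_deriv ?_
    congr 1
    simp only [Pi.add_apply, Pi.sub_apply]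
    rw [← mul_assoc, ← mul_assoc, ← Real.exp_add, ← Real.exp_add]
    have e1 : k + -(1/2) * (β / 2 * y + q / y) ^ 2 =
        -(β ^ 2 * y ^ 2 / 8) - q ^ 2 / (2 * y ^ 2) := by
      rw [hk]; field_simp; ring
    have e2 : -k + -(1/2) * (β / 2 * y - q / y) ^ 2 =
        -(β ^ 2 * y ^ 2 / 8) - q ^ 2 / (2 * y ^ 2) := by
      rw [hk]; field_simp; ring
    rw [e1, e2]; ring
  have hHtop : Filter.Tendsto H Filter.atTop
      (nhds (c * (Real.exp k * (S / 2) + Real.exp (-k) * (S / 2)))) := by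
    have hi : Filter.Tendsto (fun y : ℝ => q / y) Filter.atTop (nhds 0) :=
      Filter.Tendsto.const_div_atTop Filter.tendsto_id q
    have hl : Filter.Tendsto (fun y : ℝ => β / 2 * y) Filter.atTop Filter.atTop :=
      Filter.tendsto_id.const_mul_atTop (by positivity)
    have h1 := mwG_top.comp (hl.atTop_add hi)
    have h2 := mwG_top.comp (hl.atTop_add hi.neg)
    have h3 := ((h1.const_mul (Real.exp k)).add (h2.const_mul (Real.exp (-k)))).const_mul c
    refine h3.congr (fun y => ?_)
    simp only [H, Function.comp, sub_eq_add_neg]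
  have hHbot : Filter.Tendsto H (nhdsWithin 0 (Set.Ioi 0))
      (nhds (c * (Real.exp k * (S / 2) + Real.exp (-k) * (-(S / 2))))) := by
    have hl : Filter.Tendsto (fun y : ℝ => β / 2 * y) (nhdsWithin 0 (Set.Ioi 0)) (nhds 0) := by
      have : Continuous (fun y : ℝ => β / 2 * y) := by fun_prop
      have := this.tendsto 0
      simp only [mul_zero] at this
      exact this.mono_left nhdsWithin_le_nhds
    rcases hq0.eq_or_lt with h0 | h0
    · have hG := ((mwG_deriv 0).continuousAt.tendsto).comp hl
      have h3 := ((hG.const_mul (Real.exp k)).add (hG.const_mul (Real.exp (-k)))).const_mul c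
      have hG0 : mwG 0 = 0 := by simp [mwG]
      have hk0 : k = 0 := by rw [hk, ← h0]; simp
      rw [hG0] at h3
      have e : c * (Real.exp k * (S / 2) + Real.exp (-k) * (-(S / 2))) =
        c * (Real.exp k * 0 + Real.exp (-k) * 0) := by rw [hk0]; simp
      rw [e]
      refine h3.congr (fun y => ?_)
      simp [H, ← h0]
    · have hi : Filter.Tendsto (fun y : ℝ => q / y) (nhdsWithin 0 (Set.Ioi 0)) Filter.atTop := by
        simp only [div_eq_mul_inv]
        exact tendsto_inv_nhdsGT_zero.const_mul_atTop h0
      have h1 := mwG_top.comp (hl.add_atTop hi)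
      have h2 := mwG_bot.comp (hl.add_atBot (Filter.tendsto_neg_atTop_atBot.comp hi))
      have h3 := ((h1.const_mul (Real.exp k)).add (h2.const_mul (Real.exp (-k)))).const_mul c
      refine h3.congr (fun y => ?_)
      simp only [H, Function.comp, sub_eq_add_neg]
  have hYtop : Filter.Tendsto Y Filter.atTop Filter.atTop := by
    refine Real.tendsto_sqrt_atTop.comp ?_
    have : Filter.Tendsto (fun x : ℝ => 2 / β * x + -σ ^ 2) Filter.atTop Filter.atTop :=
      Filter.tendsto_atTop_add_const_right _ _ (Filter.tendsto_id.const_mul_atTop (by positivity))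
    refine this.congr (fun x => by ring)
  have hYbot : Filter.Tendsto Y (nhdsWithin (β * σ ^ 2 / 2) (Set.Ioi (β * σ ^ 2 / 2)))
      (nhdsWithin 0 (Set.Ioi 0)) := by
    refine tendsto_nhdsWithin_of_tendsto_nhds_of_eventually_within _ ?_ ?_
    · have hc : Continuous Y := by fun_prop
      have := hc.tendsto (β * σ ^ 2 / 2)
      have e : Y (β * σ ^ 2 / 2) = 0 := by
        have : 2 * (β * σ ^ 2 / 2) / β - σ ^ 2 = 0 := by field_simp; ring
        simp only [Y, this, Real.sqrt_zero]
      rw [e] at this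
      exact this.mono_left nhdsWithin_le_nhds
    · filter_upwards [self_mem_nhdsWithin] with x hx
      exact Real.sqrt_pos.2 (hpos x hx)
  have key := mw_aux (a := β * σ ^ 2 / 2) (f := H ∘ Y)
    (f' := fun x : ℝ => (1 / (S * Real.sqrt (2 * x / β - σ ^ 2))) *
        Real.exp (-(β * x) / 4 - ω ^ 2 / (2 * (2 * x / β - σ ^ 2)))) ?_ ?_
    (hHbot.comp hYbot) (hHtop.comp hYtop)
  · refine ⟨key.1, key.2.trans ?_⟩
    have e : -(q * β) / 2 = -k := by rw [hk]; ring
    rw [e, hcdef]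
    field_simp
    ring
  · intro x hx
    have hp := hpos x hx
    have hy : 0 < Y x := Real.sqrt_pos.2 hp
    have hY2 : Y x ^ 2 = 2 * x / β - σ ^ 2 := Real.sq_sqrt hp.le
    have hlin : HasDerivAt (fun x : ℝ => 2 * x / β - σ ^ 2) (2 / β) x := by
      simpa using (((hasDerivAt_id x).const_mul 2).div_const β).sub_const (σ ^ 2)
    have h := (hH _ hy).comp x (hlin.sqrt hp.ne')
    refine h.congr_deriv ?_
    change _ = 1 / (S * Y x) * _
    change _ * (2 / β / (2 * Y x)) = _
    rw [← hY2, hq2]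
    have e : -(β * x) / 4 - q ^ 2 / (2 * Y x ^ 2) =
        -(σ ^ 2 * β ^ 2) / 8 + (-(β ^ 2 * Y x ^ 2 / 8) - q ^ 2 / (2 * Y x ^ 2)) := by
      have : β ^ 2 * Y x ^ 2 = 2 * x * β - β ^ 2 * σ ^ 2 := by rw [hY2]; field_simp
      rw [this]; ring
    rw [e, Real.exp_add, hcdef]
    field_simp
  · intro x hx
    positivity
end

section
/- Fix n ≥ 1 and a finite type κ. For s : Fin n → Fin 4 let P_s denote the n-qubit Pauli string, i.e. the 2ⁿ×2ⁿ matrix indexed by (Fin n → Fin 2) whose (x,y) entry is ∏_{i} (σ_{s i})_{x i, y i}, where σ₀, σ₁, σ₂, σ₃ are the identity and the Pauli matrices X, Y, Z. Then for every complex matrix M indexed by ((Fin n → Fin 2) × κ): M − 2^{−n} · (I_{2ⁿ} ⊗ Tr_q M) = 2^{−(2n+1)} · Σ_{s ≠ (const 0)} [P_s ⊗ I_κ, [P_s ⊗ I_κ, M]], where Tr_q M is the partial trace over the qubit factor, i.e. the κ×κ matrix with entries (Tr_q M)(b,b') := Σ_{a} M((a,b),(a,b')), ⊗ is the Kronecker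 product, I denotes identity matrices, [X,Y] := XY − YX, and the sum ranges over all nontrivial Pauli strings s. -/
open Matrix
open scoped Kronecker

noncomputable section

/-- The single-qubit Pauli matrices: `σ₀ = I`, `σ₁ = X`, `σ₂ = Y`, `σ₃ = Z`. -/
def pauli : Fin 4 → Matrix (Fin 2) (Fin 2) ℂ
  | 0 => !![1, 0; 0, 1]
  | 1 => !![0, 1; 1, 0]
  | 2 => !![0, -Complex.I; Complex.I, 0]
  | 3 => !![1, 0; 0, -1]

/-- The `n`-qubit Pauli string `P_s = σ_{s 1} ⊗ ⋯ ⊗ σ_{s n}` for `s : Fin n → Fin 4`,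
as a `2ⁿ×2ⁿ` matrix indexed by `Fin n → Fin 2`. -/
def pauliString {n : ℕ} (s : Fin n → Fin 4) :
    Matrix (Fin n → Fin 2) (Fin n → Fin 2) ℂ :=
  Matrix.of fun x y => ∏ i : Fin n, pauli (s i) (x i) (y i)

/-- The partial trace over the qubit register:
`(Tr_q M)(b,b') := Σ_a M((a,b),(a,b'))`. -/
def partialTraceQubits {n : ℕ} {κ : Type*} [Fintype κ]
    (M : Matrix ((Fin n → Fin 2) × κ) ((Fin n → Fin 2) × κ) ℂ) : Matrix κ κ ℂ :=
  Matrix.of fun b b' => ∑ a : Fin n → Fin 2, M (a, b) (a, b')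

end

lemma pauli_mul_self (k : Fin 4) (x y : Fin 2) :
    ∑ z, pauli k x z * pauli k z y = if x = y then 1 else 0 := by
  fin_cases k <;> fin_cases x <;> fin_cases y <;> simp [pauli]

lemma pauli_twirl (x a b y : Fin 2) :
    ∑ k, pauli k x a * pauli k b y = if x = y ∧ a = b then 2 else 0 := by
  fin_cases x <;> fin_cases y <;> fin_cases a <;> fin_cases b <;>
    simp [pauli, Fin.sum_univ_four] <;> norm_num

lemma pauliString_mul_self {n : ℕ} (s : Fin n → Fin 4) :
    pauliString s * pauliString s = 1 := by
  ext x y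
  simp only [Matrix.mul_apply, pauliString, Matrix.of_apply, ← Finset.prod_mul_distrib]
  rw [← Fintype.prod_sum (fun i z => pauli (s i) (x i) z * pauli (s i) z (y i))]
  simp only [pauli_mul_self, Matrix.one_apply]
  by_cases h : x = y
  · simp [h]
  · rw [if_neg h]
    obtain ⟨i, hi⟩ := Function.ne_iff.mp h
    exact Finset.prod_eq_zero (Finset.mem_univ i) (if_neg hi)

lemma pauliString_twirl {n : ℕ} (x a b y : Fin n → Fin 2) :
    ∑ s, pauliString s x a * pauliString s b y = if x = y ∧ a = b then (2 : ℂ) ^ n else 0 := by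
  simp only [pauliString, Matrix.of_apply, ← Finset.prod_mul_distrib]
  rw [← Fintype.prod_sum (fun i k => pauli k (x i) (a i) * pauli k (b i) (y i))]
  simp only [pauli_twirl]
  by_cases h : x = y ∧ a = b
  · simp [h]
  · rw [if_neg h]
    have : ∃ i, ¬ (x i = y i ∧ a i = b i) := by
      by_contra! hc
      exact h ⟨funext fun i => (hc i).1, funext fun i => (hc i).2⟩
    obtain ⟨i, hi⟩ := this
    exact Finset.prod_eq_zero (Finset.mem_univ i) (if_neg hi)

lemma pauliString_zero {n : ℕ} : pauliString (fun _ : Fin n => 0) = 1 := by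
  ext x y
  have h0 : pauli 0 = 1 := by
    ext i j; fin_cases i <;> fin_cases j <;> simp [pauli]
  simp only [pauliString, Matrix.of_apply, h0, Matrix.one_apply]
  by_cases h : x = y
  · simp [h]
  · rw [if_neg h]
    obtain ⟨i, hi⟩ := Function.ne_iff.mp h
    exact Finset.prod_eq_zero (Finset.mem_univ i) (if_neg hi)

lemma sum_conj {n : ℕ} {κ : Type*} [Fintype κ] [DecidableEq κ]
    (M : Matrix ((Fin n → Fin 2) × κ) ((Fin n → Fin 2) × κ) ℂ) :
    ∑ s : Fin n → Fin 4,
      pauliString s ⊗ₖ (1 : Matrix κ κ ℂ) * M * pauliString s ⊗ₖ (1 : Matrix κ κ ℂ) =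
    (2 : ℂ) ^ n • ((1 : Matrix (Fin n → Fin 2) (Fin n → Fin 2) ℂ) ⊗ₖ partialTraceQubits M) := by
  ext ⟨x, c⟩ ⟨y, d⟩
  have h1 : ∀ s : Fin n → Fin 4, (pauliString s ⊗ₖ (1 : Matrix κ κ ℂ) * M *
      pauliString s ⊗ₖ (1 : Matrix κ κ ℂ)) (x, c) (y, d) =
      ∑ b, ∑ a, pauliString s x a * pauliString s b y * M (a, c) (b, d) := by
    intro s
    simp only [Matrix.mul_apply, Fintype.sum_prod_type, Matrix.kroneckerMap_apply,
      Matrix.one_apply, mul_ite, mul_one, mul_zero, ite_mul, zero_mul,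
      Finset.sum_ite_eq, Finset.sum_ite_eq', Finset.mem_univ, if_true, Finset.sum_mul]
    exact Finset.sum_congr rfl fun b _ => Finset.sum_congr rfl fun a _ => by ring
  rw [Matrix.sum_apply]
  simp only [h1]
  rw [Finset.sum_comm]
  have h2 : ∀ b : Fin n → Fin 2, (∑ s : Fin n → Fin 4, ∑ a,
      pauliString s x a * pauliString s b y * M (a, c) (b, d)) =
      if x = y then (2 : ℂ) ^ n * M (b, c) (b, d) else 0 := by
    intro b
    rw [Finset.sum_comm]
    simp only [← Finset.sum_mul, pauliString_twirl]
    by_cases h : x = y <;> simp [h]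
  simp only [h2, partialTraceQubits, Matrix.smul_apply, Matrix.kroneckerMap_apply,
    Matrix.one_apply, Matrix.of_apply, smul_eq_mul]
  by_cases h : x = y <;> simp [h, Finset.mul_sum]

/-- The deviation of `M` from "maximally mixed on the qubit register tensored with its
partial trace" equals `2^{−(2n+1)}` times the sum of double commutators with all nontrivial
Pauli strings (tensored with the identity on the ancilla register `κ`). -/
theorem sub_maximallyMixed_eq_sum_double_commutator {n : ℕ} (hn : 1 ≤ n)
    {κ : Type*} [Fintype κ] [DecidableEq κ]
    (M : Matrix ((Fin n → Fin 2) × κ) ((Fin n → Fin 2) × κ) ℂ) :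
    M - ((2 : ℂ) ^ n)⁻¹ •
        ((1 : Matrix (Fin n → Fin 2) (Fin n → Fin 2) ℂ) ⊗ₖ partialTraceQubits M) =
      ((2 : ℂ) ^ (2 * n + 1))⁻¹ •
        ∑ s ∈ Finset.univ.filter (fun s : Fin n → Fin 4 => s ≠ fun _ => 0),
          (pauliString s ⊗ₖ (1 : Matrix κ κ ℂ) *
              (pauliString s ⊗ₖ (1 : Matrix κ κ ℂ) * M - M * pauliString s ⊗ₖ (1 : Matrix κ κ ℂ)) -
            (pauliString s ⊗ₖ (1 : Matrix κ κ ℂ) * M - M * pauliString s ⊗ₖ (1 : Matrix κ κ ℂ)) *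
              pauliString s ⊗ₖ (1 : Matrix κ κ ℂ)) := by
  have hQ : ∀ s : Fin n → Fin 4, pauliString s ⊗ₖ (1 : Matrix κ κ ℂ) *
      pauliString s ⊗ₖ (1 : Matrix κ κ ℂ) = 1 := by
    intro s
    rw [← Matrix.mul_kronecker_mul, pauliString_mul_self, one_mul, Matrix.one_kronecker_one]
  rw [Finset.sum_filter_of_ne]
  · have h : ∀ s : Fin n → Fin 4, (pauliString s ⊗ₖ (1 : Matrix κ κ ℂ) *
              (pauliString s ⊗ₖ (1 : Matrix κ κ ℂ) * M - M * pauliString s ⊗ₖ (1 : Matrix κ κ ℂ)) -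
            (pauliString s ⊗ₖ (1 : Matrix κ κ ℂ) * M - M * pauliString s ⊗ₖ (1 : Matrix κ κ ℂ)) *
              pauliString s ⊗ₖ (1 : Matrix κ κ ℂ)) =
        (2 : ℂ) • M - (2 : ℂ) • (pauliString s ⊗ₖ (1 : Matrix κ κ ℂ) * M *
          pauliString s ⊗ₖ (1 : Matrix κ κ ℂ)) := by
      intro s
      rw [mul_sub, sub_mul, ← mul_assoc, hQ, mul_assoc M, hQ, ← mul_assoc, two_smul, two_smul,
        one_mul, mul_one]
      abel
    simp only [h]
    rw [Finset.sum_sub_distrib, ← Finset.smul_sum, ← Finset.smul_sum, sum_conj]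
    simp only [Finset.sum_const, Finset.card_univ, Fintype.card_fun, Fintype.card_fin]
    rw [← Nat.cast_smul_eq_nsmul ℂ, smul_sub]
    simp only [smul_smul]
    have h2 : (2 : ℂ) ^ n ≠ 0 := pow_ne_zero _ two_ne_zero
    have e4 : ((4 ^ n : ℕ) : ℂ) = 2 ^ n * 2 ^ n := by
      push_cast
      rw [← mul_pow]; norm_num
    have e5 : (2 : ℂ) ^ (2 * n + 1) = 2 ^ n * 2 ^ n * 2 := by ring
    rw [e4, e5]
    congr 1
    · symm
      convert one_smul ℂ M using 2
      field_simp
    · congr 1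
      field_simp
  · intro s _ hs h0
    apply hs
    rw [h0, pauliString_zero, Matrix.one_kronecker_one]
    simp
end
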